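/- (Bottom of the ascent for k = 2) In the Cholesky setting, (1/3)Tr(𝛉³) = ∂ Tr(θ₁θ₂). -/

import Mathlib

/-- An abstract model of the Dolbeault double complex of `(p,q)`-forms on a complex
manifold: a bigraded associative `ℂ`-algebra `Ω = ⨁ Ω^{p,q}`, graded-commutative with
respect to total degree, with `ℂ`-linear operators `∂` (`pd`) and `∂̄` (`pdb`) of
bidegrees `(1,0)` and `(0,1)`, squaring to zero and anticommuting, satisfying the
graded Leibniz rule. -/
structure DolbeaultAlgebra (Ω : Type*) [Ring Ω] [Algebra ℂ Ω] where
  /-- the `ℂ`-subspace of elements of bidegree `(p,q)` -/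
  deg : ℕ → ℕ → Submodule ℂ Ω
  one_mem : (1 : Ω) ∈ deg 0 0
  mul_mem : ∀ {p q p' q'} {a b : Ω}, a ∈ deg p q → b ∈ deg p' q' →
    a * b ∈ deg (p + p') (q + q')
  gcomm : ∀ {p q p' q'} (a b : Ω), a ∈ deg p q → b ∈ deg p' q' →
    a * b = ((-1 : ℂ) ^ ((p + q) * (p' + q'))) • (b * a)
  /-- the operator `∂` -/
  pd : Ω →ₗ[ℂ] Ω
  /-- the operator `∂̄` -/
  pdb : Ω →ₗ[ℂ] Ω
  pd_mem : ∀ {p q} {a : Ω}, a ∈ deg p q → pd a ∈ deg (p + 1) q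
  pdb_mem : ∀ {p q} {a : Ω}, a ∈ deg p q → pdb a ∈ deg p (q + 1)
  pd_pd : ∀ a : Ω, pd (pd a) = 0
  pdb_pdb : ∀ a : Ω, pdb (pdb a) = 0
  pd_pdb : ∀ a : Ω, pd (pdb a) + pdb (pd a) = 0
  pd_leibniz : ∀ {p q} (a b : Ω), a ∈ deg p q →
    pd (a * b) = pd a * b + ((-1 : ℂ) ^ (p + q)) • (a * pd b)
  pdb_leibniz : ∀ {p q} (a b : Ω), a ∈ deg p q →
    pdb (a * b) = pdb a * b + ((-1 : ℂ) ^ (p + q)) • (a * pdb b)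

namespace DolbeaultAlgebra

variable {Ω : Type*} [Ring Ω] [Algebra ℂ Ω] {r : ℕ}

/-- the entrywise extension of `∂` to `r × r` matrices over `Ω` -/
def mpd (A : DolbeaultAlgebra Ω) (M : Matrix (Fin r) (Fin r) Ω) :
    Matrix (Fin r) (Fin r) Ω := M.map A.pd

/-- the entrywise extension of `∂̄` to `r × r` matrices over `Ω` -/
def mpdb (A : DolbeaultAlgebra Ω) (M : Matrix (Fin r) (Fin r) Ω) :
    Matrix (Fin r) (Fin r) Ω := M.map A.pdb

/-- the assertion that all entries of a matrix lie in `Ω^{p,q}` -/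
def MatDeg (A : DolbeaultAlgebra Ω) (p q : ℕ) (M : Matrix (Fin r) (Fin r) Ω) : Prop :=
  ∀ i j, M i j ∈ A.deg p q

end DolbeaultAlgebra

variable {Ω : Type*} [Ring Ω] [Algebra ℂ Ω]

namespace DolbeaultAlgebra

section helpers
variable {r : ℕ}

theorem MatDeg.mul {A : DolbeaultAlgebra Ω} {p q p' q' : ℕ} {M N : Matrix (Fin r) (Fin r) Ω}
    (hM : A.MatDeg p q M) (hN : A.MatDeg p' q' N) : A.MatDeg (p + p') (q + q') (M * N) := by
  intro i j
  rw [Matrix.mul_apply]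
  exact Submodule.sum_mem _ fun k _ => A.mul_mem (hM i k) (hN k j)

theorem MatDeg.add {A : DolbeaultAlgebra Ω} {p q : ℕ} {M N : Matrix (Fin r) (Fin r) Ω}
    (hM : A.MatDeg p q M) (hN : A.MatDeg p q N) : A.MatDeg p q (M + N) := by
  intro i j
  exact Submodule.add_mem _ (hM i j) (hN i j)

theorem MatDeg.mpd {A : DolbeaultAlgebra Ω} {p q : ℕ} {M : Matrix (Fin r) (Fin r) Ω}
    (hM : A.MatDeg p q M) : A.MatDeg (p + 1) q (A.mpd M) := by
  intro i j
  exact A.pd_mem (hM i j)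

theorem trace_mul_comm_deg (A : DolbeaultAlgebra Ω) {p q p' q' : ℕ}
    {M N : Matrix (Fin r) (Fin r) Ω} (hM : A.MatDeg p q M) (hN : A.MatDeg p' q' N) :
    Matrix.trace (M * N) = ((-1 : ℂ) ^ ((p + q) * (p' + q'))) • Matrix.trace (N * M) := by
  simp only [Matrix.trace, Matrix.diag_apply, Matrix.mul_apply, Finset.smul_sum]
  rw [Finset.sum_comm]
  refine Finset.sum_congr rfl fun i _ => Finset.sum_congr rfl fun j _ => ?_
  exact A.gcomm _ _ (hM j i) (hN i j)

theorem mpd_mul (A : DolbeaultAlgebra Ω) {p q : ℕ}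
    {M N : Matrix (Fin r) (Fin r) Ω} (hM : A.MatDeg p q M) :
    A.mpd (M * N) = A.mpd M * N + ((-1 : ℂ) ^ (p + q)) • (M * A.mpd N) := by
  ext i j
  simp only [DolbeaultAlgebra.mpd, Matrix.map_apply, Matrix.mul_apply, Matrix.add_apply,
    Matrix.smul_apply, map_sum, Finset.smul_sum]
  rw [← Finset.sum_add_distrib]
  exact Finset.sum_congr rfl fun k _ => A.pd_leibniz _ _ (hM i k)

theorem mpd_mpd (A : DolbeaultAlgebra Ω) (M : Matrix (Fin r) (Fin r) Ω) :
    A.mpd (A.mpd M) = 0 := by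
  ext i j
  exact A.pd_pd _

theorem pd_one (A : DolbeaultAlgebra Ω) : A.pd 1 = 0 := by
  have := A.pd_leibniz 1 1 A.one_mem
  simpa using this

theorem mpd_one (A : DolbeaultAlgebra Ω) :
    A.mpd (1 : Matrix (Fin r) (Fin r) Ω) = 0 := by
  ext i j
  by_cases hij : i = j
  · subst hij; simp [DolbeaultAlgebra.mpd, pd_one]
  · simp [DolbeaultAlgebra.mpd, hij]

theorem pd_trace (A : DolbeaultAlgebra Ω) (M : Matrix (Fin r) (Fin r) Ω) :
    A.pd (Matrix.trace M) = Matrix.trace (A.mpd M) := by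
  simp [Matrix.trace, DolbeaultAlgebra.mpd]

/-- lower triangular matrices: diagonal of a product -/
theorem lower_mul_diag {M N : Matrix (Fin r) (Fin r) Ω}
    (hM : ∀ i j : Fin r, i < j → M i j = 0) (hN : ∀ i j : Fin r, i < j → N i j = 0)
    (i : Fin r) : (M * N) i i = M i i * N i i := by
  rw [Matrix.mul_apply]
  refine Finset.sum_eq_single i (fun k _ hk => ?_) (by simp)
  rcases lt_or_gt_of_ne hk with h | h
  · rw [hN k i h, mul_zero]
  · rw [hM i k h, zero_mul]

theorem lower_mul {M N : Matrix (Fin r) (Fin r) Ω}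
    (hM : ∀ i j : Fin r, i < j → M i j = 0) (hN : ∀ i j : Fin r, i < j → N i j = 0)
    (i j : Fin r) (hij : i < j) : (M * N) i j = 0 := by
  rw [Matrix.mul_apply]
  refine Finset.sum_eq_zero fun k _ => ?_
  rcases lt_or_ge i k with h | h
  · rw [hM i k h, zero_mul]
  · rw [hN k j (lt_of_le_of_lt h hij), mul_zero]

theorem upper_mul {M N : Matrix (Fin r) (Fin r) Ω}
    (hM : ∀ i j : Fin r, j ≤ i → M i j = 0) (hN : ∀ i j : Fin r, j ≤ i → N i j = 0)
    (i j : Fin r) (hij : j ≤ i) : (M * N) i j = 0 := by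
  rw [Matrix.mul_apply]
  refine Finset.sum_eq_zero fun k _ => ?_
  rcases le_or_gt k i with h | h
  · rw [hM i k h, zero_mul]
  · rw [hN k j (hij.trans h.le), mul_zero]

theorem lower_inv (A : DolbeaultAlgebra Ω) {c d : Matrix (Fin r) (Fin r) Ω}
    (hc : A.MatDeg 0 0 c) (hd : A.MatDeg 0 0 d)
    (hcl : ∀ i j : Fin r, i < j → c i j = 0) (hcd : c * d = 1) :
    ∀ i j : Fin r, i < j → d i j = 0 := by
  intro i
  induction i using WellFoundedLT.induction with
  | ind i ih =>
    have key : ∀ j, i ≤ j → (c * d) i j = c i i * d i j := by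
      intro j hj
      rw [Matrix.mul_apply]
      refine Finset.sum_eq_single i (fun k _ hk => ?_) (by simp)
      rcases lt_or_gt_of_ne hk with h | h
      · rw [ih k h j (lt_of_lt_of_le h hj), mul_zero]
      · rw [hcl i k h, zero_mul]
    intro j hij
    have h1 := key i le_rfl
    have h2 := key j hij.le
    rw [hcd, Matrix.one_apply_eq] at h1
    rw [hcd, Matrix.one_apply_ne hij.ne] at h2
    have h3 : c i i * d i i = d i i * c i i := by
      simpa using A.gcomm _ _ (hc i i) (hd i i)
    calc d i j = (d i i * c i i) * d i j := by rw [← h3, ← h1, one_mul]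
      _ = 0 := by rw [mul_assoc, ← h2, mul_zero]

theorem strict_upper {b t m : Matrix (Fin r) (Fin r) Ω}
    (hbu : ∀ i j : Fin r, j < i → b i j = 0) (hbd : ∀ i : Fin r, b i i = 1)
    (hm : ∀ i j : Fin r, j ≤ i → m i j = 0) (h : t * b = m) :
    ∀ j i : Fin r, j ≤ i → t i j = 0 := by
  intro j
  induction j using WellFoundedLT.induction with
  | ind j ih =>
    intro i hij
    have h1 := hm i j hij
    rw [← h, Matrix.mul_apply, Finset.sum_eq_single j, hbd, mul_one] at h1
    · exact h1
    · intro k _ hk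
      rcases lt_or_gt_of_ne hk with h | h
      · rw [ih k h i (h.le.trans hij), zero_mul]
      · rw [hbu k j h, mul_zero]
    · simp

theorem sq_zero (A : DolbeaultAlgebra Ω) {x : Ω} (hx : x ∈ A.deg 1 0) : x * x = 0 := by
  have h := A.gcomm x x hx hx
  simp only [add_zero, mul_one, pow_one, neg_smul, one_smul] at h
  have h2 : (2 : ℂ) • (x * x) = 0 := by
    rw [two_smul]; nth_rewrite 1 [h]; simp
  have := congrArg (fun y => (1/2 : ℂ) • y) h2
  simpa [smul_smul] using this

end helpers

end DolbeaultAlgebra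

/-- (Bottom of the ascent for `k = 2`) In the Cholesky setting,
`(1/3)Tr(Bθ³) = ∂Tr(θ₁θ₂)`. -/
theorem stmt13
    (A : DolbeaultAlgebra Ω) (r : ℕ) (hr : 1 ≤ r)
    (b c binv cinv : Matrix (Fin r) (Fin r) Ω)
    (hbdeg : A.MatDeg 0 0 b) (hcdeg : A.MatDeg 0 0 c)
    (hbinvdeg : A.MatDeg 0 0 binv) (hcinvdeg : A.MatDeg 0 0 cinv)
    (hbu : ∀ i j : Fin r, j < i → b i j = 0) (hbd : ∀ i : Fin r, b i i = 1)
    (hcl : ∀ i j : Fin r, i < j → c i j = 0)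
    (hbinvl : binv * b = 1) (hbinvr : b * binv = 1)
    (hcinvl : cinv * c = 1) (hcinvr : c * cinv = 1)
    (h hinv : Matrix (Fin r) (Fin r) Ω) (hh : h = c * b) (hhinv : hinv = binv * cinv)
    (θ₁ θ₂ θ θb₁ θb₂ θb : Matrix (Fin r) (Fin r) Ω)
    (hθ₁ : θ₁ = A.mpd b * binv) (hθ₂ : θ₂ = cinv * A.mpd c) (hθ : θ = θ₁ + θ₂)
    (hθb₁ : θb₁ = A.mpdb b * binv) (hθb₂ : θb₂ = cinv * A.mpdb c) (hθb : θb = θb₁ + θb₂)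
    (Bθ Bθb BΘ : Matrix (Fin r) (Fin r) Ω)
    (hBθ : Bθ = hinv * A.mpd h) (hBθb : Bθb = hinv * A.mpdb h) (hBΘ : BΘ = A.mpdb Bθ) :
    (1 / 3 : ℂ) • Matrix.trace (Bθ ^ 3) = A.pd (Matrix.trace (θ₁ * θ₂)) := by
  have d1 : A.MatDeg 1 0 θ₁ := by
    rw [hθ₁]; exact hbdeg.mpd.mul hbinvdeg
  have d2 : A.MatDeg 1 0 θ₂ := by
    rw [hθ₂]; simpa using hcinvdeg.mul hcdeg.mpd
  -- triangularity
  have t1 : ∀ i j : Fin r, j ≤ i → θ₁ i j = 0 := by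
    have hm : ∀ i j : Fin r, j ≤ i → A.mpd b i j = 0 := by
      intro i j hij
      rcases hij.lt_or_eq with h | h
      · simp [DolbeaultAlgebra.mpd, hbu i j h]
      · subst h; simp [DolbeaultAlgebra.mpd, hbd, A.pd_one]
    have := DolbeaultAlgebra.strict_upper (t := θ₁) hbu hbd hm
      (by rw [hθ₁, mul_assoc, hbinvl, mul_one])
    exact fun i j => this j i
  have t2 : ∀ i j : Fin r, i < j → θ₂ i j = 0 := by
    rw [hθ₂]
    refine DolbeaultAlgebra.lower_mul (A.lower_inv hcdeg hcinvdeg hcl hcinvr) ?_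
    intro i j hij
    simp [DolbeaultAlgebra.mpd, hcl i j hij]
  have z1 : Matrix.trace (θ₁ * θ₁ * θ₁) = 0 := by
    refine Finset.sum_eq_zero fun i _ => ?_
    exact DolbeaultAlgebra.upper_mul (DolbeaultAlgebra.upper_mul t1 t1) t1 i i le_rfl
  have z2 : Matrix.trace (θ₂ * θ₂ * θ₂) = 0 := by
    refine Finset.sum_eq_zero fun i _ => ?_
    rw [Matrix.diag_apply, DolbeaultAlgebra.lower_mul_diag (DolbeaultAlgebra.lower_mul t2 t2) t2,
      DolbeaultAlgebra.lower_mul_diag t2 t2, A.sq_zero (d2 i i), zero_mul]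
  -- Maurer-Cartan
  have e1 : A.mpd θ₁ = θ₁ * θ₁ := by
    have h1 := A.mpd_mul (M := b) (N := binv) hbdeg
    rw [hbinvr, A.mpd_one] at h1
    simp only [add_zero, pow_zero, one_smul] at h1
    have h2 : A.mpd binv = - (binv * (A.mpd b * binv)) := by
      have h3 : b * A.mpd binv = -(A.mpd b * binv) := by
        rw [eq_neg_iff_add_eq_zero, add_comm]; exact h1.symm
      calc A.mpd binv = binv * (b * A.mpd binv) := by rw [← mul_assoc, hbinvl, one_mul]
        _ = _ := by rw [h3, mul_neg]
    rw [hθ₁, A.mpd_mul hbdeg.mpd, A.mpd_mpd, h2]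
    simp [mul_assoc]
  have e2 : A.mpd θ₂ = - (θ₂ * θ₂) := by
    have h1 := A.mpd_mul (M := cinv) (N := c) hcinvdeg
    rw [hcinvl, A.mpd_one] at h1
    simp only [add_zero, pow_zero, one_smul] at h1
    have h2 : A.mpd cinv = - (cinv * A.mpd c * cinv) := by
      have h3 : A.mpd cinv * c = -(cinv * A.mpd c) := by
        rw [eq_neg_iff_add_eq_zero]; exact h1.symm
      calc A.mpd cinv = A.mpd cinv * c * cinv := by rw [mul_assoc, hcinvr, mul_one]
        _ = _ := by rw [h3, neg_mul]
    rw [hθ₂, A.mpd_mul hcinvdeg, A.mpd_mpd, h2]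
    simp [mul_assoc]
  -- conjugation
  have hB : Bθ = binv * (θ * b) := by
    have h1 : A.mpd h = A.mpd c * b + c * A.mpd b := by
      rw [hh, A.mpd_mul hcdeg]; simp
    have h2 : θ * b = cinv * (A.mpd c * b + c * A.mpd b) := by
      rw [hθ, hθ₁, hθ₂, add_mul, mul_add, mul_assoc (A.mpd b), hbinvl, mul_one,
        ← mul_assoc cinv c, hcinvl, one_mul, mul_assoc, add_comm]
    rw [hBθ, hhinv, h1, h2, mul_assoc]
  have dθ : A.MatDeg 1 0 θ := by rw [hθ]; exact d1.add d2
  have hcube : Bθ ^ 3 = binv * (θ * θ * θ * b) := by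
    have hk : ∀ X : Matrix (Fin r) (Fin r) Ω, b * (binv * X) = X := fun X => by
      rw [← mul_assoc, hbinvr, one_mul]
    rw [hB]
    simp only [pow_succ, pow_zero, one_mul, mul_assoc, hk]
  have htr : Matrix.trace (Bθ ^ 3) = Matrix.trace (θ * θ * θ) := by
    rw [hcube, A.trace_mul_comm_deg hbinvdeg (((dθ.mul dθ).mul dθ).mul hbdeg)]
    simp [mul_assoc, hbinvr]
  have cyc : ∀ X Y Z : Matrix (Fin r) (Fin r) Ω, A.MatDeg 1 0 X → A.MatDeg 1 0 Y →
      A.MatDeg 1 0 Z → Matrix.trace (X * Y * Z) = Matrix.trace (Y * Z * X) := by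
    intro X Y Z hX hY hZ
    rw [mul_assoc, A.trace_mul_comm_deg hX (hY.mul hZ)]
    norm_num
  have hexp : Matrix.trace (θ * θ * θ)
      = (3 : ℂ) • (Matrix.trace (θ₁ * θ₁ * θ₂) + Matrix.trace (θ₁ * θ₂ * θ₂)) := by
    have a1 := cyc θ₁ θ₁ θ₂ d1 d1 d2
    have a2 := cyc θ₁ θ₂ θ₁ d1 d2 d1
    have b1 := cyc θ₁ θ₂ θ₂ d1 d2 d2
    have b2 := cyc θ₂ θ₂ θ₁ d2 d2 d1
    have h3 : (3 : ℂ) = 1 + 1 + 1 := by norm_num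
    rw [hθ, h3]
    simp only [add_mul, mul_add, Matrix.trace_add, add_smul, one_smul, z1, z2]
    rw [b1, b2, a1, a2]
    abel
  rw [htr, hexp, smul_smul, A.pd_trace, A.mpd_mul d1, e1, e2]
  norm_num [mul_assoc]
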